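/- arXiv:1911.01112 — 2 statements merged into one kernel-verified Lean document; each statement's English description precedes it below -/
import Mathlib

section
/- Let n ≥ 1 and let p, q, a, b be real numbers with 1 ≤ p ≤ q < ∞, −n/q < b ≤ a, and a − b − 1 = n/q − n/p. Then there exists a constant C > 0 such that for every smooth compactly supported function f : ℝ^n → ℂ, the weighted interpolation inequality (∫_{ℝ^n} |x|^{bq} |f(x)|^q dx)^{1/q} ≤ C (∫_{ℝ^n} |x|^{ap} |∇f(x)|^p dx)^{1/p} holds. -/
open MeasureTheory Real

/-!
Hardy's inequality `∫ |x|^(a-1) |u| ≤ C ∫ |x|^a |∇u|` for `a > 1 - n` follows by integrating `∇u`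
along the ray from `x` to infinity. It absorbs the terms in which a derivative falls on the weight,
so applying the Gagliardo–Nirenberg–Sobolev inequality to `|x|^a u` bounds `|x|^a u` in
`L^(n/(n-1))` by `∫ |x|^a |∇u|`; for `n = 1` integration along rays gives the sup bound directly.
Interpolating between these two estimates settles `p = 1`.

For general `p`, apply the case `p = 1` to `|f|^r` with `r = 1 + q (1 - 1/p)`. Hölder's inequality
bounds the resulting right-hand side by `‖|x|^a ∇f‖_p` times a power of `∫ |x|^(bq) |f|^q`, which
is finite because `bq > -n` and hence can be cancelled.
-/

section EnormRpow

variable {E F : Type*} [NormedAddCommGroup E] [NormedAddCommGroup F]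

lemma enorm_norm_rpow_of_ne_zero {x : E} (hx : x ≠ 0) (s : ℝ) : ‖‖x‖ ^ s‖ₑ = ‖x‖ₑ ^ s := by
  rw [← ofReal_norm, ← ofReal_norm x, ENNReal.ofReal_rpow_of_pos (norm_pos_iff.2 hx),
    norm_of_nonneg (by positivity)]

lemma enorm_rpow_add_of_ne_zero {x : E} (hx : x ≠ 0) (s t : ℝ) :
    ‖x‖ₑ ^ (s + t) = ‖x‖ₑ ^ s * ‖x‖ₑ ^ t :=
  ENNReal.rpow_add s t (enorm_ne_zero.2 hx) enorm_ne_top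

lemma enorm_rpow_ne_top_of_ne_zero {x : E} (hx : x ≠ 0) (s : ℝ) : ‖x‖ₑ ^ s ≠ ⊤ :=
  ENNReal.rpow_ne_top_of_ne_zero (enorm_ne_zero.2 hx) enorm_ne_top

lemma measurable_enorm_rpow_mul_enorm_rpow [MeasurableSpace E] [BorelSpace E]
    {g : E → F} (hg : Continuous g) (s t : ℝ) :
    Measurable fun x => ‖x‖ₑ ^ s * ‖g x‖ₑ ^ t :=
  (measurable_enorm.pow_const s).mul (hg.enorm.measurable.pow_const t)

end EnormRpow

section Hardy

open Module Set

variable {E F : Type*} [NormedAddCommGroup E] [NormedSpace ℝ E] [NormedAddCommGroup F]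
  [NormedSpace ℝ F] {u : E → F}

lemma enorm_le_lintegral_Ioi_enorm_fderiv_smul (hu : ContDiff ℝ 1 u) (hu_supp : HasCompactSupport u)
    {x : E} (hx : x ≠ 0) :
    ‖u x‖ₑ ≤ ∫⁻ t in Ioi (1 : ℝ), ‖fderiv ℝ u (t • x)‖ₑ * ‖x‖ₑ := by
  have h_smooth : ContDiff ℝ 1 fun t : ℝ => u (t • -x) := by fun_prop
  have h_supp : HasCompactSupport fun t : ℝ => u (t • -x) :=
    hu_supp.comp_isClosedEmbedding (isClosedEmbedding_smul_left (neg_ne_zero.2 hx))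
  have h_deriv (t : ℝ) : deriv (fun t : ℝ => u (t • -x)) t = fderiv ℝ u (t • -x) (-x) := by
    have h_line : HasDerivAt (fun t : ℝ => t • -x) (-x) t := by
      simpa using (hasDerivAt_id t).smul_const (-x)
    exact ((hu.differentiable one_ne_zero _).hasFDerivAt.comp_hasDerivAt t h_line).deriv
  calc ‖u x‖ₑ ≤ ∫⁻ t in Iic (-1 : ℝ), ‖deriv (fun t : ℝ => u (t • -x)) t‖ₑ := by
        simpa using h_supp.enorm_le_lintegral_Ici_deriv h_smooth (-1)
    _ ≤ ∫⁻ t in Iic (-1 : ℝ), ‖fderiv ℝ u (-t • x)‖ₑ * ‖x‖ₑ := by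
        refine lintegral_mono fun t => ?_
        rw [h_deriv]
        simpa using (fderiv ℝ u (t • -x)).le_opENorm (-x)
    _ = ∫⁻ t in Ioi (1 : ℝ), ‖fderiv ℝ u (t • x)‖ₑ * ‖x‖ₑ := by
        rw [setLIntegral_congr Iio_ae_eq_Iic.symm]
        simpa using (Measure.measurePreserving_neg volume).setLIntegral_comp_preimage_emb
          (MeasurableEquiv.neg ℝ).measurableEmbedding
          (fun t : ℝ => ‖fderiv ℝ u (t • x)‖ₑ * ‖x‖ₑ) (Ioi 1)

lemma lintegral_Ioi_rpow_of_lt {s c : ℝ} (hs : s < -1) (hc : 0 < c) :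
    ∫⁻ t in Ioi c, ENNReal.ofReal (t ^ s) = ENNReal.ofReal (-c ^ (s + 1) / (s + 1)) := by
  rw [← integral_Ioi_rpow_of_lt hs hc, ofReal_integral_eq_lintegral_ofReal
    (integrableOn_Ioi_rpow_of_lt hs hc)]
  filter_upwards [ae_restrict_mem measurableSet_Ioi] with t ht
  exact rpow_nonneg (hc.trans ht).le s

variable [MeasurableSpace E] [BorelSpace E] [FiniteDimensional ℝ E] {μ : Measure E}
  [μ.IsAddHaarMeasure]

lemma lintegral_enorm_rpow_mul_comp_smul {t : ℝ} (ht : 0 < t) (s : ℝ) {g : E → ENNReal}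
    (hg : Measurable g) :
    ∫⁻ x, ‖x‖ₑ ^ s * g (t • x) ∂μ =
      ENNReal.ofReal (t ^ (-s - finrank ℝ E)) * ∫⁻ x, ‖x‖ₑ ^ s * g x ∂μ := by
  have h_weight (x : E) : ‖x‖ₑ ^ s = ENNReal.ofReal (t ^ (-s)) * ‖t • x‖ₑ ^ s := by
    rw [enorm_smul, ENNReal.mul_rpow_of_ne_top enorm_ne_top enorm_ne_top, ← mul_assoc,
      enorm_of_nonneg ht.le, ENNReal.ofReal_rpow_of_pos ht, ← ENNReal.ofReal_mul (by positivity),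
      ← rpow_add ht]
    simp
  have h_scale : μ.map (t • ·) = ENNReal.ofReal (t ^ (-finrank ℝ E : ℝ)) • μ := by
    rw [Measure.map_addHaar_smul μ ht.ne', abs_of_pos (by positivity), rpow_neg ht.le,
      rpow_natCast]
  calc ∫⁻ x, ‖x‖ₑ ^ s * g (t • x) ∂μ
      = ENNReal.ofReal (t ^ (-s)) * ∫⁻ x, ‖t • x‖ₑ ^ s * g (t • x) ∂μ := by
        rw [← lintegral_const_mul' _ _ ENNReal.ofReal_ne_top]
        simp_rw [← mul_assoc, ← h_weight]
    _ = ENNReal.ofReal (t ^ (-s)) *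
          (ENNReal.ofReal (t ^ (-finrank ℝ E : ℝ)) * ∫⁻ x, ‖x‖ₑ ^ s * g x ∂μ) := by
        rw [← lintegral_map (f := fun x => ‖x‖ₑ ^ s * g x) (by fun_prop)
          (measurable_const_smul t), h_scale, lintegral_smul_measure, smul_eq_mul]
    _ = ENNReal.ofReal (t ^ (-s - finrank ℝ E)) * ∫⁻ x, ‖x‖ₑ ^ s * g x ∂μ := by
        rw [← mul_assoc, ← ENNReal.ofReal_mul (by positivity), ← rpow_add ht, sub_eq_add_neg]

theorem hardy_lintegral_enorm_rpow_mul_le [Nontrivial E] (hu : ContDiff ℝ 1 u)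
    (hu_supp : HasCompactSupport u) {a : ℝ} (ha : 1 - (finrank ℝ E : ℝ) < a) :
    ∫⁻ x, ‖x‖ₑ ^ (a - 1) * ‖u x‖ₑ ∂μ ≤
      ENNReal.ofReal (1 / (a + finrank ℝ E - 1)) * ∫⁻ x, ‖x‖ₑ ^ a * ‖fderiv ℝ u x‖ₑ ∂μ := by
  have h_meas : Measurable fun x => ‖fderiv ℝ u x‖ₑ :=
    (hu.continuous_fderiv one_ne_zero).enorm.measurable
  have h_ray {x : E} (hx : x ≠ 0) : ‖x‖ₑ ^ (a - 1) * ‖u x‖ₑ ≤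
      ∫⁻ t in Ioi (1 : ℝ), ‖x‖ₑ ^ a * ‖fderiv ℝ u (t • x)‖ₑ := by
    calc ‖x‖ₑ ^ (a - 1) * ‖u x‖ₑ
        ≤ ‖x‖ₑ ^ (a - 1) * ∫⁻ t in Ioi (1 : ℝ), ‖fderiv ℝ u (t • x)‖ₑ * ‖x‖ₑ := by
          gcongr
          exact enorm_le_lintegral_Ioi_enorm_fderiv_smul hu hu_supp hx
      _ = ∫⁻ t in Ioi (1 : ℝ), ‖x‖ₑ ^ (a - 1) * (‖fderiv ℝ u (t • x)‖ₑ * ‖x‖ₑ) :=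
          (lintegral_const_mul' _ _ (enorm_rpow_ne_top_of_ne_zero hx _)).symm
      _ = ∫⁻ t in Ioi (1 : ℝ), ‖x‖ₑ ^ a * ‖fderiv ℝ u (t • x)‖ₑ := by
          refine lintegral_congr fun t => ?_
          rw [← sub_add_cancel a 1, enorm_rpow_add_of_ne_zero hx, ENNReal.rpow_one]
          ring_nf
  calc ∫⁻ x, ‖x‖ₑ ^ (a - 1) * ‖u x‖ₑ ∂μ
      ≤ ∫⁻ x, (∫⁻ t in Ioi (1 : ℝ), ‖x‖ₑ ^ a * ‖fderiv ℝ u (t • x)‖ₑ) ∂μ :=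
        lintegral_mono_ae ((Measure.ae_ne μ 0).mono fun _ => h_ray)
    _ = ∫⁻ t in Ioi (1 : ℝ), ∫⁻ x, ‖x‖ₑ ^ a * ‖fderiv ℝ u (t • x)‖ₑ ∂μ :=
        lintegral_lintegral_swap ((measurable_fst.enorm.pow_const a).mul
          (h_meas.comp (measurable_snd.smul measurable_fst))).aemeasurable
    _ = ∫⁻ t in Ioi (1 : ℝ), ENNReal.ofReal (t ^ (-a - finrank ℝ E)) *
          ∫⁻ x, ‖x‖ₑ ^ a * ‖fderiv ℝ u x‖ₑ ∂μ :=
        setLIntegral_congr_fun measurableSet_Ioi fun t ht =>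
          lintegral_enorm_rpow_mul_comp_smul (one_pos.trans ht) a h_meas
    _ = ENNReal.ofReal (1 / (a + finrank ℝ E - 1)) * ∫⁻ x, ‖x‖ₑ ^ a * ‖fderiv ℝ u x‖ₑ ∂μ := by
        rw [lintegral_mul_const _ (by fun_prop), lintegral_Ioi_rpow_of_lt (by linarith) one_pos,
          one_rpow, ← neg_div_neg_eq]
        ring_nf

end Hardy

section OneDimensional

open Module Set

variable {E F : Type*} [NormedAddCommGroup E] [NormedSpace ℝ E] [NormedAddCommGroup F]
  [NormedSpace ℝ F] [MeasurableSpace E] [BorelSpace E]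

lemma exists_lintegral_comp_smul_mul_enorm_eq (h_dim : finrank ℝ E = 1) (μ : Measure E)
    [μ.IsAddHaarMeasure] :
    ∃ C : NNReal, ∀ g : E → ENNReal, Measurable g → ∀ x : E, x ≠ 0 →
      ∫⁻ t : ℝ, g (t • x) * ‖x‖ₑ = C * ∫⁻ y, g y ∂μ := by
  have : FiniteDimensional ℝ E := .of_finrank_pos (by lia)
  let L : ℝ ≃L[ℝ] E := ContinuousLinearEquiv.ofFinrankEq (by simp [h_dim])
  have hL (t : ℝ) : L t = t • L 1 := by simp [← map_smul]
  obtain ⟨c, h_map⟩ : ∃ c : NNReal, Measure.map L volume = c • μ :=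
    ⟨_, Measure.isAddLeftInvariant_eq_smul _ _⟩
  refine ⟨‖L 1‖₊ * c, fun g hg x hx => ?_⟩
  obtain ⟨s, rfl⟩ := L.surjective x
  have hs : s ≠ 0 := by simpa using hx
  have h_scale : ENNReal.ofReal |s| * ∫⁻ t : ℝ, g (L (t * s)) = ∫⁻ t : ℝ, g (L t) := by
    conv_rhs => rw [← Real.smul_map_volume_mul_right hs, lintegral_smul_measure,
      lintegral_map (f := fun t => g (L t)) (hg.comp L.continuous.measurable) (by fun_prop),
      smul_eq_mul]
  have h_enorm : ‖L s‖ₑ = ‖L 1‖ₑ * ENNReal.ofReal |s| := by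
    rw [hL, enorm_smul, mul_comm, Real.enorm_eq_ofReal_abs]
  calc ∫⁻ t : ℝ, g (t • L s) * ‖L s‖ₑ = ‖L 1‖ₑ * ∫⁻ t : ℝ, g (L t) := by
        rw [lintegral_mul_const' _ _ enorm_ne_top, mul_comm, h_enorm, mul_assoc, ← h_scale]
        simp_rw [← map_smul, smul_eq_mul]
    _ = ‖L 1‖ₑ * ∫⁻ y, g y ∂Measure.map L volume := by
        rw [lintegral_map hg L.continuous.measurable]
    _ = (‖L 1‖₊ * c : NNReal) * ∫⁻ y, g y ∂μ := by
        rw [h_map, lintegral_smul_measure, ENNReal.coe_mul, mul_assoc, ENNReal.smul_def,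
          smul_eq_mul, enorm_eq_nnnorm]

theorem exists_enorm_rpow_mul_enorm_le_lintegral (h_dim : finrank ℝ E = 1) (μ : Measure E)
    [μ.IsAddHaarMeasure] {a : ℝ} (ha : 0 ≤ a) :
    ∃ C : NNReal, ∀ u : E → F, ContDiff ℝ 1 u → HasCompactSupport u → ∀ x ≠ 0,
      ‖x‖ₑ ^ a * ‖u x‖ₑ ≤ C * ∫⁻ y, ‖y‖ₑ ^ a * ‖fderiv ℝ u y‖ₑ ∂μ := by
  obtain ⟨C, hC⟩ := exists_lintegral_comp_smul_mul_enorm_eq h_dim μ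
  refine ⟨C, fun u hu hu_supp x hx => ?_⟩
  have h_mono {t : ℝ} (ht : t ∈ Ioi (1 : ℝ)) : ‖x‖ₑ ≤ ‖t • x‖ₑ := by
    rw [enorm_smul]
    refine le_mul_of_one_le_left' ?_
    rw [enorm_of_nonneg (one_pos.trans ht).le]
    exact ENNReal.one_le_ofReal.2 (le_of_lt ht)
  calc ‖x‖ₑ ^ a * ‖u x‖ₑ
      ≤ ‖x‖ₑ ^ a * ∫⁻ t in Ioi (1 : ℝ), ‖fderiv ℝ u (t • x)‖ₑ * ‖x‖ₑ := by
        gcongr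
        exact enorm_le_lintegral_Ioi_enorm_fderiv_smul hu hu_supp hx
    _ = ∫⁻ t in Ioi (1 : ℝ), ‖x‖ₑ ^ a * (‖fderiv ℝ u (t • x)‖ₑ * ‖x‖ₑ) :=
        (lintegral_const_mul' _ _ (enorm_rpow_ne_top_of_ne_zero hx a)).symm
    _ ≤ ∫⁻ t in Ioi (1 : ℝ), ‖t • x‖ₑ ^ a * ‖fderiv ℝ u (t • x)‖ₑ * ‖x‖ₑ := by
        refine setLIntegral_mono' measurableSet_Ioi fun t ht => ?_
        rw [mul_assoc]
        gcongr
        exact h_mono ht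
    _ ≤ ∫⁻ t : ℝ, ‖t • x‖ₑ ^ a * ‖fderiv ℝ u (t • x)‖ₑ * ‖x‖ₑ := setLIntegral_le_lintegral _ _
    _ = C * ∫⁻ y, ‖y‖ₑ ^ a * ‖fderiv ℝ u y‖ₑ ∂μ := by
        refine hC (fun y => ‖y‖ₑ ^ a * ‖fderiv ℝ u y‖ₑ) ?_ x hx
        simpa using measurable_enorm_rpow_mul_enorm_rpow (hu.continuous_fderiv one_ne_zero) a 1

end OneDimensional

section Sobolev

open Module Filter Topology

variable {E F : Type*} [NormedAddCommGroup E] [NormedAddCommGroup F] [NormedSpace ℝ F]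

lemma enorm_fderiv_smul_le [NormedSpace ℝ E] {w : E → ℝ} {u : E → F} {x : E}
    (hw : DifferentiableAt ℝ w x) (hu : DifferentiableAt ℝ u x) :
    ‖fderiv ℝ (fun y => w y • u y) x‖ₑ ≤
      ‖w x‖ₑ * ‖fderiv ℝ u x‖ₑ + ‖fderiv ℝ w x‖ₑ * ‖u x‖ₑ := by
  rw [fderiv_fun_smul hw hu]
  simp only [enorm_eq_nnnorm, ← ENNReal.coe_mul, ← ENNReal.coe_add, ENNReal.coe_le_coe]
  refine (nnnorm_add_le _ _).trans_eq ?_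
  rw [nnnorm_smul, ContinuousLinearMap.nnnorm_smulRight_apply]

lemma lintegral_smul_rpow_le_lintegral_fderiv [NormedSpace ℝ E] [MeasurableSpace E] [BorelSpace E]
    [FiniteDimensional ℝ E] (μ : Measure E) [μ.IsAddHaarMeasure] {w : E → ℝ} {u : E → F}
    (hw : ContDiff ℝ 1 w) (hu : ContDiff ℝ 1 u) (hu_supp : HasCompactSupport u) {P : ℝ}
    (hP : HolderConjugate (finrank ℝ E) P) :
    ∫⁻ x, (‖w x‖ₑ * ‖u x‖ₑ) ^ P ∂μ ≤ lintegralPowLePowLIntegralFDerivConst μ P *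
      (∫⁻ x, ‖w x‖ₑ * ‖fderiv ℝ u x‖ₑ + ‖fderiv ℝ w x‖ₑ * ‖u x‖ₑ ∂μ) ^ P := by
  have hP_nonneg : 0 ≤ P := hP.symm.nonneg
  calc ∫⁻ x, (‖w x‖ₑ * ‖u x‖ₑ) ^ P ∂μ = ∫⁻ x, ‖w x • u x‖ₑ ^ P ∂μ := by simp_rw [enorm_smul]
    _ ≤ lintegralPowLePowLIntegralFDerivConst μ P *
          (∫⁻ x, ‖fderiv ℝ (fun y => w y • u y) x‖ₑ ∂μ) ^ P :=
        lintegral_pow_le_pow_lintegral_fderiv μ (hw.smul hu) hu_supp.smul_left hP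
    _ ≤ _ := by
        gcongr with x
        exact enorm_fderiv_smul_le (hw.differentiable one_ne_zero x)
          (hu.differentiable one_ne_zero x)

/-- A `C¹` approximation, as `ε → 0⁺`, of the weight `‖x‖ ^ s` with a nonpositive exponent `s`,
which is singular at the origin. -/
noncomputable def regularizedNormRpow (s ε : ℝ) (x : E) : ℝ := (‖x‖ ^ 2 + ε) ^ (s / 2)

lemma regularizedNormRpow_zero (s : ℝ) (x : E) : regularizedNormRpow s 0 x = ‖x‖ ^ s := by
  rw [regularizedNormRpow, add_zero, ← rpow_natCast_mul (norm_nonneg x), Nat.cast_ofNat,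
    mul_div_cancel₀ s two_ne_zero]

lemma regularizedNormRpow_le {s ε : ℝ} (hs : s ≤ 0) (hε : 0 ≤ ε) {x : E} (hx : x ≠ 0) :
    regularizedNormRpow s ε x ≤ ‖x‖ ^ s := by
  rw [← regularizedNormRpow_zero]
  exact rpow_le_rpow_of_nonpos (by positivity) (by gcongr) (by linarith)

lemma enorm_regularizedNormRpow_le {s ε : ℝ} (hs : s ≤ 0) (hε : 0 ≤ ε) {x : E} (hx : x ≠ 0) :
    ‖regularizedNormRpow s ε x‖ₑ ≤ ‖x‖ₑ ^ s := by
  have h_nonneg : 0 ≤ regularizedNormRpow s ε x := rpow_nonneg (by positivity) _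
  rw [← enorm_norm_rpow_of_ne_zero hx, enorm_le_iff_norm_le, norm_of_nonneg h_nonneg,
    norm_of_nonneg (by positivity)]
  exact regularizedNormRpow_le hs hε hx

lemma tendsto_regularizedNormRpow (s : ℝ) {x : E} (hx : x ≠ 0) :
    Tendsto (fun ε => regularizedNormRpow s ε x) (𝓝[>] 0) (𝓝 (‖x‖ ^ s)) := by
  rw [← regularizedNormRpow_zero]
  have h_cont : ContinuousAt (fun ε : ℝ => regularizedNormRpow s ε x) 0 :=
    (continuousAt_const.add continuousAt_id).rpow_const (.inl (by simpa using hx))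
  exact h_cont.tendsto.mono_left nhdsWithin_le_nhds

variable [InnerProductSpace ℝ E]

lemma contDiff_regularizedNormRpow (s : ℝ) {ε : ℝ} (hε : 0 < ε) :
    ContDiff ℝ 1 (regularizedNormRpow (E := E) s ε) :=
  ((contDiff_norm_sq ℝ).add contDiff_const).rpow_const_of_ne fun x => by positivity

lemma enorm_fderiv_regularizedNormRpow_le {s ε : ℝ} (hs : s ≤ 0) (hε : 0 < ε) {x : E}
    (hx : x ≠ 0) :
    ‖fderiv ℝ (regularizedNormRpow s ε) x‖ₑ ≤ ENNReal.ofReal (-s) * ‖x‖ₑ ^ (s - 1) := by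
  have hx_pos : 0 < ‖x‖ := norm_pos_iff.2 hx
  rw [← enorm_norm_rpow_of_ne_zero hx, ← enorm_of_nonneg (by linarith), ← enorm_mul,
    enorm_le_iff_norm_le, norm_of_nonneg (mul_nonneg (by linarith) (by positivity))]
  have h_fderiv : HasFDerivAt (regularizedNormRpow s ε)
      ((s / 2 * (‖x‖ ^ 2 + ε) ^ (s / 2 - 1)) • 2 • innerSL ℝ x) x :=
    ((hasStrictFDerivAt_norm_sq x).hasFDerivAt.add_const ε).rpow_const (.inl (by positivity))
  calc ‖fderiv ℝ (regularizedNormRpow s ε) x‖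
      = -s * (regularizedNormRpow (s - 2) ε x * ‖x‖) := by
        rw [h_fderiv.fderiv, ← Nat.cast_smul_eq_nsmul ℝ, norm_smul, norm_smul, norm_mul,
          innerSL_apply_norm, norm_of_nonpos (by linarith), norm_of_nonneg (by positivity),
          regularizedNormRpow, sub_div, div_self two_ne_zero, Nat.cast_ofNat, norm_ofNat]
        ring
    _ ≤ -s * (‖x‖ ^ (s - 2) * ‖x‖) := by
        gcongr
        · linarith
        · exact regularizedNormRpow_le (by linarith) hε.le hx
    _ = -s * ‖x‖ ^ (s - 1) := by
        rw [← rpow_add_one hx_pos.ne']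
        ring_nf

lemma enorm_fderiv_norm_rpow_smul_add_le {u : E → F} {x : E} (hx : x ≠ 0) {s M : ℝ} (hM : 1 < M)
    (hs : s ≤ 0) (hu : DifferentiableAt ℝ u x) :
    ‖x‖ₑ ^ s * ‖fderiv ℝ (fun y => ‖y‖ ^ M • u y) x‖ₑ +
        ENNReal.ofReal (-s) * ‖x‖ₑ ^ (s - 1) * ‖‖x‖ ^ M • u x‖ₑ ≤
      ‖x‖ₑ ^ (s + M) * ‖fderiv ℝ u x‖ₑ +
        ENNReal.ofReal (M - s) * (‖x‖ₑ ^ (s + M - 1) * ‖u x‖ₑ) := by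
  have h_fderiv : ‖fderiv ℝ (fun y : E => ‖y‖ ^ M) x‖ₑ = ENNReal.ofReal M * ‖x‖ₑ ^ (M - 1) := by
    rw [← ofReal_norm, norm_fderiv_norm_id_rpow x hM, ENNReal.ofReal_mul (by linarith),
      ← enorm_norm_rpow_of_ne_zero hx, enorm_of_nonneg (by positivity)]
  calc ‖x‖ₑ ^ s * ‖fderiv ℝ (fun y => ‖y‖ ^ M • u y) x‖ₑ +
        ENNReal.ofReal (-s) * ‖x‖ₑ ^ (s - 1) * ‖‖x‖ ^ M • u x‖ₑ
      ≤ ‖x‖ₑ ^ s * (‖x‖ₑ ^ M * ‖fderiv ℝ u x‖ₑ + ENNReal.ofReal M * ‖x‖ₑ ^ (M - 1) * ‖u x‖ₑ) +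
        ENNReal.ofReal (-s) * ‖x‖ₑ ^ (s - 1) * (‖x‖ₑ ^ M * ‖u x‖ₑ) := by
        rw [enorm_smul, enorm_norm_rpow_of_ne_zero hx, ← h_fderiv]
        gcongr
        rw [← enorm_norm_rpow_of_ne_zero hx]
        exact enorm_fderiv_smul_le
          ((contDiff_norm_rpow hM).differentiable one_ne_zero x) hu
    _ = ‖x‖ₑ ^ s * ‖x‖ₑ ^ M * ‖fderiv ℝ u x‖ₑ +
        (ENNReal.ofReal M * (‖x‖ₑ ^ s * ‖x‖ₑ ^ (M - 1)) +
          ENNReal.ofReal (-s) * (‖x‖ₑ ^ (s - 1) * ‖x‖ₑ ^ M)) * ‖u x‖ₑ := by ring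
    _ = ‖x‖ₑ ^ (s + M) * ‖fderiv ℝ u x‖ₑ +
        ENNReal.ofReal (M - s) * (‖x‖ₑ ^ (s + M - 1) * ‖u x‖ₑ) := by
        simp only [← enorm_rpow_add_of_ne_zero hx]
        rw [sub_eq_add_neg M s, ENNReal.ofReal_add (by linarith) (by linarith),
          ← add_sub_assoc, sub_add_eq_add_sub]
        ring

variable [MeasurableSpace E] [BorelSpace E] [FiniteDimensional ℝ E] (μ : Measure E)
  [μ.IsAddHaarMeasure]

lemma lintegral_enorm_rpow_mul_rpow_le_of_nonpos {u : E → F} (hu : ContDiff ℝ 1 u)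
    (hu_supp : HasCompactSupport u) {s P : ℝ} (hs : s ≤ 0)
    (hP : HolderConjugate (finrank ℝ E) P) :
    ∫⁻ x, (‖x‖ₑ ^ s * ‖u x‖ₑ) ^ P ∂μ ≤ lintegralPowLePowLIntegralFDerivConst μ P *
      (∫⁻ x, ‖x‖ₑ ^ s * ‖fderiv ℝ u x‖ₑ +
        ENNReal.ofReal (-s) * ‖x‖ₑ ^ (s - 1) * ‖u x‖ₑ ∂μ) ^ P := by
  have : Nontrivial E := nontrivial_of_finrank_pos (by exact_mod_cast hP.pos)
  have hP_nonneg : 0 ≤ P := hP.symm.nonneg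
  let w (ε : ℝ) : E → ℝ := regularizedNormRpow s ε
  have h_meas (ε : ℝ) : Measurable (w ε) :=
    ((measurable_norm.pow_const 2).add_const ε).pow_const (s / 2)
  have h_bound {ε : ℝ} (hε : 0 < ε) : ∫⁻ x, (‖w ε x‖ₑ * ‖u x‖ₑ) ^ P ∂μ ≤
      lintegralPowLePowLIntegralFDerivConst μ P *
        (∫⁻ x, ‖x‖ₑ ^ s * ‖fderiv ℝ u x‖ₑ +
          ENNReal.ofReal (-s) * ‖x‖ₑ ^ (s - 1) * ‖u x‖ₑ ∂μ) ^ P := by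
    refine (lintegral_smul_rpow_le_lintegral_fderiv μ (contDiff_regularizedNormRpow s hε) hu
      hu_supp hP).trans ?_
    gcongr _ * ?_ ^ P
    refine lintegral_mono_ae ?_
    filter_upwards [Measure.ae_ne μ 0] with x hx
    gcongr
    · exact enorm_regularizedNormRpow_le hs hε.le hx
    · exact enorm_fderiv_regularizedNormRpow_le hs hε hx
  have h_tendsto {x : E} (hx : x ≠ 0) : Tendsto (fun ε => (‖w ε x‖ₑ * ‖u x‖ₑ) ^ P) (𝓝[>] 0)
      (𝓝 ((‖x‖ₑ ^ s * ‖u x‖ₑ) ^ P)) := by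
    rw [← enorm_norm_rpow_of_ne_zero hx]
    exact (ENNReal.continuous_rpow_const.tendsto _).comp <|
      ENNReal.Tendsto.mul_const (tendsto_regularizedNormRpow s hx).enorm (.inr enorm_ne_top)
  calc ∫⁻ x, (‖x‖ₑ ^ s * ‖u x‖ₑ) ^ P ∂μ
      = ∫⁻ x, liminf (fun ε => (‖w ε x‖ₑ * ‖u x‖ₑ) ^ P) (𝓝[>] 0) ∂μ :=
        lintegral_congr_ae <|
          (Measure.ae_ne μ 0).mono fun _ hx => (h_tendsto hx).liminf_eq.symm
    _ ≤ liminf (fun ε => ∫⁻ x, (‖w ε x‖ₑ * ‖u x‖ₑ) ^ P ∂μ) (𝓝[>] 0) :=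
        lintegral_liminf_le fun ε => (h_meas ε).enorm.mul hu.continuous.enorm.measurable
          |>.pow_const P
    _ ≤ _ := by
        refine liminf_le_of_frequently_le' (Eventually.frequently ?_)
        filter_upwards [self_mem_nhdsWithin] with ε hε using h_bound hε

theorem exists_weighted_sobolev_lintegral_le {a P : ℝ}
    (ha : 1 - (finrank ℝ E : ℝ) < a) (hP : HolderConjugate (finrank ℝ E) P) :
    ∃ C : NNReal, ∀ u : E → F, ContDiff ℝ 1 u → HasCompactSupport u →
      (∫⁻ x, (‖x‖ₑ ^ a * ‖u x‖ₑ) ^ P ∂μ) ^ (1 / P) ≤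
        C * ∫⁻ x, ‖x‖ₑ ^ a * ‖fderiv ℝ u x‖ₑ ∂μ := by
  have : Nontrivial E := nontrivial_of_finrank_pos (by exact_mod_cast hP.pos)
  have hP_pos : 0 < P := hP.symm.pos
  obtain ⟨M, hM, haM⟩ : ∃ M : ℝ, 1 < M ∧ a - M ≤ 0 :=
    ⟨max a 2, one_lt_two.trans_le (le_max_right a 2), sub_nonpos.2 (le_max_left a 2)⟩
  set K : NNReal := (M - (a - M)).toNNReal * (1 / (a + finrank ℝ E - 1)).toNNReal
  set S : NNReal := lintegralPowLePowLIntegralFDerivConst μ P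
  refine ⟨S ^ (1 / P) * (1 + K), fun u hu hu_supp => ?_⟩
  have h_lower : ∫⁻ x, ‖x‖ₑ ^ a * ‖fderiv ℝ u x‖ₑ +
        ENNReal.ofReal (M - (a - M)) * (‖x‖ₑ ^ (a - 1) * ‖u x‖ₑ) ∂μ ≤
      (1 + K) * ∫⁻ x, ‖x‖ₑ ^ a * ‖fderiv ℝ u x‖ₑ ∂μ := by
    rw [lintegral_add_left, lintegral_const_mul' _ _ ENNReal.ofReal_ne_top, add_mul, one_mul,
      ENNReal.coe_mul, mul_assoc]
    · gcongr
      · rfl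
      · exact hardy_lintegral_enorm_rpow_mul_le hu hu_supp ha
    · simpa using measurable_enorm_rpow_mul_enorm_rpow (hu.continuous_fderiv one_ne_zero) a 1
  calc (∫⁻ x, (‖x‖ₑ ^ a * ‖u x‖ₑ) ^ P ∂μ) ^ (1 / P)
      = (∫⁻ x, (‖x‖ₑ ^ (a - M) * ‖‖x‖ ^ M • u x‖ₑ) ^ P ∂μ) ^ (1 / P) := by
        congr 1
        refine lintegral_congr_ae ((Measure.ae_ne μ 0).mono fun x hx => ?_)
        simp only [enorm_smul, enorm_norm_rpow_of_ne_zero hx, ← mul_assoc,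
          ← enorm_rpow_add_of_ne_zero hx, sub_add_cancel]
    _ ≤ (S * (∫⁻ x, ‖x‖ₑ ^ (a - M) * ‖fderiv ℝ (fun y => ‖y‖ ^ M • u y) x‖ₑ +
          ENNReal.ofReal (-(a - M)) * ‖x‖ₑ ^ (a - M - 1) * ‖‖x‖ ^ M • u x‖ₑ ∂μ) ^ P) ^ (1 / P) := by
        gcongr
        exact lintegral_enorm_rpow_mul_rpow_le_of_nonpos μ ((contDiff_norm_rpow hM).smul hu)
          hu_supp.smul_left haM hP
    _ ≤ (S * ((1 + K) * ∫⁻ x, ‖x‖ₑ ^ a * ‖fderiv ℝ u x‖ₑ ∂μ) ^ P) ^ (1 / P) := by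
        gcongr
        refine (lintegral_mono_ae ((Measure.ae_ne μ 0).mono fun x hx => ?_)).trans h_lower
        simpa only [sub_add_cancel] using
          enorm_fderiv_norm_rpow_smul_add_le hx hM haM (hu.differentiable one_ne_zero x)
    _ = (S ^ (1 / P) * (1 + K) : NNReal) * ∫⁻ x, ‖x‖ₑ ^ a * ‖fderiv ℝ u x‖ₑ ∂μ := by
        rw [ENNReal.mul_rpow_of_nonneg _ _ (by positivity), ← ENNReal.rpow_mul,
          mul_one_div_cancel hP_pos.ne', ENNReal.rpow_one, ← mul_assoc, ENNReal.coe_mul (S ^ _),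
          ENNReal.coe_rpow_of_nonneg _ (by positivity), ENNReal.coe_add, ENNReal.coe_one]

end Sobolev

section Interpolation

lemma coe_mul_rpow_mul_coe_mul_rpow {δ : ℝ} (hδ₀ : 0 ≤ δ) (hδ₁ : δ ≤ 1) (c d : NNReal)
    (D : ENNReal) :
    (c * D) ^ δ * (d * D) ^ (1 - δ) = (c ^ δ * d ^ (1 - δ) : NNReal) * D := by
  have hδ₁' : 0 ≤ 1 - δ := sub_nonneg.2 hδ₁
  have h_add : D ^ δ * D ^ (1 - δ) = D := by
    rw [← ENNReal.rpow_add_of_nonneg _ _ hδ₀ hδ₁', add_sub_cancel, ENNReal.rpow_one]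
  rw [ENNReal.mul_rpow_of_nonneg _ _ hδ₀, ENNReal.mul_rpow_of_nonneg _ _ hδ₁', mul_mul_mul_comm,
    h_add, ENNReal.coe_mul, ENNReal.coe_rpow_of_nonneg _ hδ₀, ENNReal.coe_rpow_of_nonneg _ hδ₁']

lemma rpow_le_of_rpow_add_le_mul_rpow {N K : ENNReal} (hN : N ≠ ⊤) {s t : ℝ} (hs : 0 < s)
    (h : N ^ (s + t) ≤ K * N ^ t) : N ^ s ≤ K := by
  rcases eq_or_ne N 0 with rfl | hN_zero
  · simp [ENNReal.zero_rpow_of_pos hs]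
  · rw [ENNReal.rpow_add _ _ hN_zero hN] at h
    exact (ENNReal.mul_le_mul_iff_left (ENNReal.rpow_pos (pos_iff_ne_zero.2 hN_zero) hN).ne'
      (ENNReal.rpow_ne_top_of_ne_zero hN_zero hN)).1 h

variable {α : Type*} [MeasurableSpace α] {μ : Measure α} {f g : α → ENNReal}

lemma rpow_lintegral_rpow_mul_rpow_le (hf : AEMeasurable f μ) (hg : AEMeasurable g μ)
    {δ P Q : ℝ} (hP : 0 < P) (hQ : 0 < Q) (hδ₀ : 0 ≤ δ) (hδ₁ : δ ≤ 1)
    (h : 1 / Q = δ + (1 - δ) / P) :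
    (∫⁻ x, (f x ^ δ * g x ^ (1 - δ)) ^ Q ∂μ) ^ (1 / Q) ≤
      (∫⁻ x, f x ∂μ) ^ δ * ((∫⁻ x, g x ^ P ∂μ) ^ (1 / P)) ^ (1 - δ) := by
  have : 0 ≤ 1 - δ := sub_nonneg.2 hδ₁
  have h_sum : δ * Q + (1 - δ) / P * Q = 1 := by
    rw [← add_mul, ← h, one_div_mul_cancel hQ.ne']
  calc (∫⁻ x, (f x ^ δ * g x ^ (1 - δ)) ^ Q ∂μ) ^ (1 / Q)
      = (∫⁻ x, f x ^ (δ * Q) * (g x ^ P) ^ ((1 - δ) / P * Q) ∂μ) ^ (1 / Q) := by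
        congr 1
        refine lintegral_congr fun x => ?_
        rw [ENNReal.mul_rpow_of_nonneg _ _ hQ.le, ← ENNReal.rpow_mul, ← ENNReal.rpow_mul,
          ← ENNReal.rpow_mul, ← mul_assoc, mul_div_cancel₀ _ hP.ne']
    _ ≤ ((∫⁻ x, f x ∂μ) ^ (δ * Q) * (∫⁻ x, g x ^ P ∂μ) ^ ((1 - δ) / P * Q)) ^ (1 / Q) := by
        gcongr
        exact ENNReal.lintegral_mul_norm_pow_le hf (hg.pow_const P) (by positivity)
          (by positivity) h_sum
    _ = (∫⁻ x, f x ∂μ) ^ δ * ((∫⁻ x, g x ^ P ∂μ) ^ (1 / P)) ^ (1 - δ) := by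
        rw [ENNReal.mul_rpow_of_nonneg _ _ (by positivity)]
        simp only [← ENNReal.rpow_mul]
        congr 2 <;> field_simp

lemma rpow_lintegral_rpow_mul_rpow_le_of_ae_le (hf : AEMeasurable f μ) {K : ENNReal}
    (hg : ∀ᵐ x ∂μ, g x ≤ K) {Q : ℝ} (hQ : 1 ≤ Q) :
    (∫⁻ x, (f x ^ (1 / Q) * g x ^ (1 - 1 / Q)) ^ Q ∂μ) ^ (1 / Q) ≤
      (∫⁻ x, f x ∂μ) ^ (1 / Q) * K ^ (1 - 1 / Q) := by
  have hQ_pos : 0 < Q := one_pos.trans_le hQ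
  have hQ_inv : 0 ≤ 1 - 1 / Q := sub_nonneg.2 ((div_le_one hQ_pos).2 hQ)
  have h_root (y : ENNReal) : (y ^ (1 / Q)) ^ Q = y := by
    rw [← ENNReal.rpow_mul, one_div_mul_cancel hQ_pos.ne', ENNReal.rpow_one]
  calc (∫⁻ x, (f x ^ (1 / Q) * g x ^ (1 - 1 / Q)) ^ Q ∂μ) ^ (1 / Q)
      ≤ (∫⁻ x, f x * (K ^ (1 - 1 / Q)) ^ Q ∂μ) ^ (1 / Q) := by
        gcongr ?_ ^ (1 / Q)
        refine lintegral_mono_ae (hg.mono fun x hx => ?_)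
        rw [ENNReal.mul_rpow_of_nonneg _ _ hQ_pos.le, h_root]
        gcongr
    _ = (∫⁻ x, f x ∂μ) ^ (1 / Q) * K ^ (1 - 1 / Q) := by
        rw [lintegral_mul_const'' _ hf, ENNReal.mul_rpow_of_nonneg _ _ (by positivity),
          ← ENNReal.rpow_mul _ Q, mul_one_div_cancel hQ_pos.ne', ENNReal.rpow_one]

end Interpolation

section ExponentOne

open Module

variable {E F : Type*} [NormedAddCommGroup E] [NormedAddCommGroup F]

lemma enorm_rpow_sub_mul_enorm_eq {x : E} (hx : x ≠ 0) (y : F) (a : ℝ) {δ : ℝ} (hδ₀ : 0 ≤ δ)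
    (hδ₁ : δ ≤ 1) :
    ‖x‖ₑ ^ (a - δ) * ‖y‖ₑ =
      (‖x‖ₑ ^ (a - 1) * ‖y‖ₑ) ^ δ * (‖x‖ₑ ^ a * ‖y‖ₑ) ^ (1 - δ) := by
  have hδ₁' : 0 ≤ 1 - δ := sub_nonneg.2 hδ₁
  rw [ENNReal.mul_rpow_of_nonneg _ _ hδ₀, ENNReal.mul_rpow_of_nonneg _ _ hδ₁', mul_mul_mul_comm,
    ← ENNReal.rpow_add_of_nonneg _ _ hδ₀ hδ₁', ← ENNReal.rpow_mul, ← ENNReal.rpow_mul,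
    ← enorm_rpow_add_of_ne_zero hx, add_sub_cancel, ENNReal.rpow_one]
  ring_nf

variable [NormedSpace ℝ F] [MeasurableSpace E] [BorelSpace E] (μ : Measure E)
  [μ.IsAddHaarMeasure]

lemma caffarelli_kohn_nirenberg_one_of_finrank_eq_one [NormedSpace ℝ E]
    (h_dim : finrank ℝ E = 1) {a Q : ℝ} (ha : 0 < a) (hQ : 1 ≤ Q) :
    ∃ C : NNReal, ∀ u : E → F, ContDiff ℝ 1 u → HasCompactSupport u →
      (∫⁻ x, (‖x‖ₑ ^ (a - 1 / Q) * ‖u x‖ₑ) ^ Q ∂μ) ^ (1 / Q) ≤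
        C * ∫⁻ x, ‖x‖ₑ ^ a * ‖fderiv ℝ u x‖ₑ ∂μ := by
  have : FiniteDimensional ℝ E := .of_finrank_pos (by lia)
  have : Nontrivial E := nontrivial_of_finrank_pos (R := ℝ) (by lia)
  obtain ⟨C, hC⟩ := exists_enorm_rpow_mul_enorm_le_lintegral (F := F) h_dim μ ha.le
  have hQ_inv₀ : 0 ≤ 1 / Q := by positivity
  have hQ_inv₁ : 1 / Q ≤ 1 := (div_le_one (by linarith)).2 hQ
  set H : NNReal := (1 / (a + finrank ℝ E - 1)).toNNReal
  refine ⟨H ^ (1 / Q) * C ^ (1 - 1 / Q), fun u hu hu_supp => ?_⟩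
  set D : ENNReal := ∫⁻ x, ‖x‖ₑ ^ a * ‖fderiv ℝ u x‖ₑ ∂μ
  have h_hardy : ∫⁻ x, ‖x‖ₑ ^ (a - 1) * ‖u x‖ₑ ∂μ ≤ H * D :=
    hardy_lintegral_enorm_rpow_mul_le hu hu_supp (by simpa [h_dim] using ha)
  have h_sup : ∀ᵐ x ∂μ, ‖x‖ₑ ^ a * ‖u x‖ₑ ≤ C * D :=
    (Measure.ae_ne μ 0).mono fun x hx => hC u hu hu_supp x hx
  have h_meas : Measurable fun x => ‖x‖ₑ ^ (a - 1) * ‖u x‖ₑ := by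
    simpa using measurable_enorm_rpow_mul_enorm_rpow hu.continuous (a - 1) 1
  calc (∫⁻ x, (‖x‖ₑ ^ (a - 1 / Q) * ‖u x‖ₑ) ^ Q ∂μ) ^ (1 / Q)
      = (∫⁻ x, ((‖x‖ₑ ^ (a - 1) * ‖u x‖ₑ) ^ (1 / Q) *
          (‖x‖ₑ ^ a * ‖u x‖ₑ) ^ (1 - 1 / Q)) ^ Q ∂μ) ^ (1 / Q) := by
        congr 1
        refine lintegral_congr_ae ((Measure.ae_ne μ 0).mono fun x hx => ?_)
        simp only [enorm_rpow_sub_mul_enorm_eq hx (u x) a hQ_inv₀ hQ_inv₁]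
    _ ≤ (∫⁻ x, ‖x‖ₑ ^ (a - 1) * ‖u x‖ₑ ∂μ) ^ (1 / Q) * (C * D) ^ (1 - 1 / Q) :=
        rpow_lintegral_rpow_mul_rpow_le_of_ae_le h_meas.aemeasurable h_sup hQ
    _ ≤ (H * D) ^ (1 / Q) * (C * D) ^ (1 - 1 / Q) := by gcongr
    _ = (H ^ (1 / Q) * C ^ (1 - 1 / Q) : NNReal) * D :=
        coe_mul_rpow_mul_coe_mul_rpow hQ_inv₀ hQ_inv₁ H C D

variable [InnerProductSpace ℝ E]

lemma caffarelli_kohn_nirenberg_one_of_one_lt_finrank (h_dim : 1 < finrank ℝ E) {a δ Q : ℝ}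
    (ha : 1 - (finrank ℝ E : ℝ) < a) (hQ : 0 < Q) (hδ₀ : 0 ≤ δ) (hδ₁ : δ ≤ 1)
    (hδQ : 1 / Q = 1 - (1 - δ) / finrank ℝ E) :
    ∃ C : NNReal, ∀ u : E → F, ContDiff ℝ 1 u → HasCompactSupport u →
      (∫⁻ x, (‖x‖ₑ ^ (a - δ) * ‖u x‖ₑ) ^ Q ∂μ) ^ (1 / Q) ≤
        C * ∫⁻ x, ‖x‖ₑ ^ a * ‖fderiv ℝ u x‖ₑ ∂μ := by
  have : FiniteDimensional ℝ E := .of_finrank_pos (by lia)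
  have : Nontrivial E := nontrivial_of_finrank_pos (R := ℝ) (by lia)
  have : 0 ≤ 1 - δ := sub_nonneg.2 hδ₁
  set P : ℝ := conjExponent (finrank ℝ E)
  have hP : HolderConjugate (finrank ℝ E) P := .conjExponent (by exact_mod_cast h_dim)
  have h_exponents : 1 / Q = δ + (1 - δ) / P := by
    rw [hδQ, div_eq_mul_inv _ P, ← hP.one_sub_inv]
    ring
  obtain ⟨C, hC⟩ := exists_weighted_sobolev_lintegral_le (F := F) μ ha hP
  set H : NNReal := (1 / (a + finrank ℝ E - 1)).toNNReal
  refine ⟨H ^ δ * C ^ (1 - δ), fun u hu hu_supp => ?_⟩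
  set D : ENNReal := ∫⁻ x, ‖x‖ₑ ^ a * ‖fderiv ℝ u x‖ₑ ∂μ
  have h_hardy : ∫⁻ x, ‖x‖ₑ ^ (a - 1) * ‖u x‖ₑ ∂μ ≤ H * D :=
    hardy_lintegral_enorm_rpow_mul_le hu hu_supp ha
  have h_meas (s : ℝ) : Measurable fun x => ‖x‖ₑ ^ s * ‖u x‖ₑ := by
    simpa using measurable_enorm_rpow_mul_enorm_rpow hu.continuous s 1
  calc (∫⁻ x, (‖x‖ₑ ^ (a - δ) * ‖u x‖ₑ) ^ Q ∂μ) ^ (1 / Q)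
      = (∫⁻ x, ((‖x‖ₑ ^ (a - 1) * ‖u x‖ₑ) ^ δ *
          (‖x‖ₑ ^ a * ‖u x‖ₑ) ^ (1 - δ)) ^ Q ∂μ) ^ (1 / Q) := by
        congr 1
        refine lintegral_congr_ae ((Measure.ae_ne μ 0).mono fun x hx => ?_)
        simp only [enorm_rpow_sub_mul_enorm_eq hx (u x) a hδ₀ hδ₁]
    _ ≤ (∫⁻ x, ‖x‖ₑ ^ (a - 1) * ‖u x‖ₑ ∂μ) ^ δ *
          ((∫⁻ x, (‖x‖ₑ ^ a * ‖u x‖ₑ) ^ P ∂μ) ^ (1 / P)) ^ (1 - δ) :=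
        rpow_lintegral_rpow_mul_rpow_le (h_meas _).aemeasurable (h_meas _).aemeasurable
          hP.symm.pos hQ hδ₀ hδ₁ h_exponents
    _ ≤ (H * D) ^ δ * (C * D) ^ (1 - δ) := by
        gcongr
        exact hC u hu hu_supp
    _ = (H ^ δ * C ^ (1 - δ) : NNReal) * D := coe_mul_rpow_mul_coe_mul_rpow hδ₀ hδ₁ H C D

theorem caffarelli_kohn_nirenberg_one [FiniteDimensional ℝ E] [Nontrivial E]
    {a b Q : ℝ} (hQ : 1 ≤ Q) (hb : -(finrank ℝ E : ℝ) / Q < b) (hba : b ≤ a)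
    (hscal : a - b - 1 = finrank ℝ E / Q - finrank ℝ E) :
    ∃ C : NNReal, ∀ u : E → F, ContDiff ℝ 1 u → HasCompactSupport u →
      (∫⁻ x, (‖x‖ₑ ^ b * ‖u x‖ₑ) ^ Q ∂μ) ^ (1 / Q) ≤
        C * ∫⁻ x, ‖x‖ₑ ^ a * ‖fderiv ℝ u x‖ₑ ∂μ := by
  have hn : 1 ≤ finrank ℝ E := finrank_pos
  have hnQ : finrank ℝ E / Q ≤ (finrank ℝ E : ℝ) := div_le_self (Nat.cast_nonneg _) hQ
  have ha : 1 - (finrank ℝ E : ℝ) < a := by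
    rw [neg_div] at hb
    linarith
  rcases hn.eq_or_lt with h_dim | h_dim
  · obtain rfl : b = a - 1 / Q := by
      rw [← h_dim, Nat.cast_one] at hscal
      linarith
    exact caffarelli_kohn_nirenberg_one_of_finrank_eq_one μ h_dim.symm
      (by simpa [← h_dim] using ha) hQ
  · have h_exponents : 1 / Q = 1 - (1 - (a - b)) / finrank ℝ E := by
      field_simp at hscal ⊢
      linarith
    simpa only [sub_sub_cancel] using
      caffarelli_kohn_nirenberg_one_of_one_lt_finrank (F := F) μ h_dim ha (one_pos.trans_le hQ)
        (sub_nonneg.2 hba) (by linarith) h_exponents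

end ExponentOne

section Integrability

open Module

variable {E F : Type*} [NormedAddCommGroup E] [NormedAddCommGroup F]

lemma ofReal_norm_rpow_mul_norm_rpow {x : E} (hx : x ≠ 0) (y : F) (s : ℝ) {t : ℝ} (ht : 0 ≤ t) :
    ENNReal.ofReal (‖x‖ ^ s * ‖y‖ ^ t) = ‖x‖ₑ ^ s * ‖y‖ₑ ^ t := by
  rw [ENNReal.ofReal_mul (by positivity), ← ENNReal.ofReal_rpow_of_pos (norm_pos_iff.2 hx),
    ← ENNReal.ofReal_rpow_of_nonneg (norm_nonneg y) ht, ofReal_norm, ofReal_norm]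

variable [NormedSpace ℝ E] [FiniteDimensional ℝ E] [Nontrivial E] [MeasurableSpace E]
  [BorelSpace E] (μ : Measure E) [μ.IsAddHaarMeasure] {g : E → F}

lemma integral_norm_rpow_mul_norm_rpow_eq_toReal (hg : Continuous g) (s : ℝ) {t : ℝ}
    (ht : 0 ≤ t) :
    ∫ x, ‖x‖ ^ s * ‖g x‖ ^ t ∂μ = (∫⁻ x, ‖x‖ₑ ^ s * ‖g x‖ₑ ^ t ∂μ).toReal := by
  have h_meas : Measurable fun x => ‖x‖ ^ s * ‖g x‖ ^ t :=
    (measurable_norm.pow_const s).mul (hg.norm.measurable.pow_const t)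
  rw [integral_eq_lintegral_of_nonneg_ae (.of_forall fun x => by positivity)
    h_meas.aestronglyMeasurable]
  congr 1
  exact lintegral_congr_ae <| (Measure.ae_ne μ 0).mono fun x hx =>
    ofReal_norm_rpow_mul_norm_rpow hx (g x) s ht

lemma integrable_norm_rpow_mul_norm_rpow (hg : Continuous g) (hg_supp : HasCompactSupport g)
    {s t : ℝ} (hs : -(finrank ℝ E : ℝ) < s) (ht : 0 < t) :
    Integrable (fun x => ‖x‖ ^ s * ‖g x‖ ^ t) μ := by
  have h_weight : LocallyIntegrable (fun x : E => ‖x‖ ^ s) μ :=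
    locallyIntegrable_of_norm_le_rpow (C := 1) (α := -s) finrank_pos (by linarith)
      (.of_forall fun x => by simp [norm_of_nonneg (rpow_nonneg (norm_nonneg x) s)])
      (measurable_norm.pow_const s).aestronglyMeasurable
  exact h_weight.integrable_smul_right_of_hasCompactSupport
    (hg.norm.rpow_const fun _ => .inr ht.le)
    (hg_supp.comp_left (g := fun y : F => ‖y‖ ^ t) (by simp [ht.ne']))

lemma lintegral_enorm_rpow_mul_enorm_rpow_ne_top (hg : Continuous g)
    (hg_supp : HasCompactSupport g) {s t : ℝ} (hs : -(finrank ℝ E : ℝ) < s) (ht : 0 < t) :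
    ∫⁻ x, ‖x‖ₑ ^ s * ‖g x‖ₑ ^ t ∂μ ≠ ⊤ := by
  have h_lt := (integrable_norm_rpow_mul_norm_rpow μ hg hg_supp hs ht).lintegral_lt_top
  rw [lintegral_congr_ae ((Measure.ae_ne μ 0).mono fun x hx =>
    ofReal_norm_rpow_mul_norm_rpow hx (g x) s ht.le)] at h_lt
  exact h_lt.ne

end Integrability

section PowerSubstitution

open Module

variable {E F : Type*} [NormedAddCommGroup E] [NormedAddCommGroup F]

lemma enorm_fderiv_norm_rpow_le_ofReal_mul [NormedSpace ℝ E] [InnerProductSpace ℝ F] {f : E → F}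
    (hf : Differentiable ℝ f) {r : ℝ} (hr : 1 < r) (x : E) :
    ‖fderiv ℝ (fun y => ‖f y‖ ^ r) x‖ₑ ≤
      ENNReal.ofReal r * (‖f x‖ₑ ^ (r - 1) * ‖fderiv ℝ f x‖ₑ) := by
  lift r to NNReal using by linarith
  simpa [mul_assoc] using enorm_fderiv_norm_rpow_le hf (x := x) (p := r) (by exact_mod_cast hr)

variable [MeasurableSpace E] [BorelSpace E] (μ : Measure E)

lemma lintegral_weighted_mul_le_rpow_mul_rpow [NormedSpace ℝ E] [FiniteDimensional ℝ E]
    [Nontrivial E] [μ.IsAddHaarMeasure] {G : Type*} [NormedAddCommGroup G] {f : E → F} {g : E → G}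
    (hf : Continuous f) (hg : Continuous g) {p : ℝ} (hp : 1 ≤ p) (q a b : ℝ) :
    ∫⁻ x, ‖x‖ₑ ^ (a + b * q * (1 - 1 / p)) * (‖f x‖ₑ ^ (q * (1 - 1 / p)) * ‖g x‖ₑ) ∂μ ≤
      (∫⁻ x, ‖x‖ₑ ^ (a * p) * ‖g x‖ₑ ^ p ∂μ) ^ (1 / p) *
        (∫⁻ x, ‖x‖ₑ ^ (b * q) * ‖f x‖ₑ ^ q ∂μ) ^ (1 - 1 / p) := by
  have hp_pos : 0 < p := one_pos.trans_le hp
  have hp_inv : 0 ≤ 1 - 1 / p := sub_nonneg.2 ((div_le_one hp_pos).2 hp)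
  refine (lintegral_congr_ae ?_).trans_le <| ENNReal.lintegral_mul_norm_pow_le
    (measurable_enorm_rpow_mul_enorm_rpow hg _ _).aemeasurable
    (measurable_enorm_rpow_mul_enorm_rpow hf _ _).aemeasurable (by positivity) hp_inv (by ring)
  filter_upwards [Measure.ae_ne μ 0] with x hx
  rw [ENNReal.mul_rpow_of_nonneg _ _ (by positivity), ENNReal.mul_rpow_of_nonneg _ _ hp_inv]
  simp only [← ENNReal.rpow_mul]
  rw [mul_assoc a, mul_one_div_cancel hp_pos.ne', mul_one, ENNReal.rpow_one,
    enorm_rpow_add_of_ne_zero hx]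
  ring

variable [InnerProductSpace ℝ E] [FiniteDimensional ℝ E] [Nontrivial E] [InnerProductSpace ℝ F]
  [μ.IsAddHaarMeasure]

lemma caffarelli_kohn_nirenberg_one_norm_rpow {a b Q r : ℝ} (hr : 1 ≤ r) (hQ : 1 ≤ Q)
    (hb : -(finrank ℝ E : ℝ) / Q < b) (hba : b ≤ a)
    (hscal : a - b - 1 = finrank ℝ E / Q - finrank ℝ E) :
    ∃ C : NNReal, ∀ f : E → F, ContDiff ℝ 1 f → HasCompactSupport f →
      (∫⁻ x, (‖x‖ₑ ^ b * ‖f x‖ₑ ^ r) ^ Q ∂μ) ^ (1 / Q) ≤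
        C * ∫⁻ x, ‖x‖ₑ ^ a * (‖f x‖ₑ ^ (r - 1) * ‖fderiv ℝ f x‖ₑ) ∂μ := by
  rcases hr.eq_or_lt with rfl | hr
  · simpa using caffarelli_kohn_nirenberg_one (F := F) μ hQ hb hba hscal
  obtain ⟨C, hC⟩ := caffarelli_kohn_nirenberg_one (F := ℝ) μ hQ hb hba hscal
  have hr_pos : 0 < r := one_pos.trans hr
  refine ⟨C * r.toNNReal, fun f hf hf_supp => ?_⟩
  have h_supp : HasCompactSupport fun x => ‖f x‖ ^ r :=
    hf_supp.comp_left (g := fun y : F => ‖y‖ ^ r) (by simp [hr_pos.ne'])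
  calc (∫⁻ x, (‖x‖ₑ ^ b * ‖f x‖ₑ ^ r) ^ Q ∂μ) ^ (1 / Q)
      = (∫⁻ x, (‖x‖ₑ ^ b * ‖‖f x‖ ^ r‖ₑ) ^ Q ∂μ) ^ (1 / Q) := by
        simp only [Real.enorm_rpow_of_nonneg (norm_nonneg _) hr_pos.le, enorm_norm]
    _ ≤ C * ∫⁻ x, ‖x‖ₑ ^ a * ‖fderiv ℝ (fun y => ‖f y‖ ^ r) x‖ₑ ∂μ :=
        hC _ (hf.norm_rpow hr) h_supp
    _ ≤ C * ∫⁻ x, ENNReal.ofReal r *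
          (‖x‖ₑ ^ a * (‖f x‖ₑ ^ (r - 1) * ‖fderiv ℝ f x‖ₑ)) ∂μ := by
        refine mul_le_mul_right (lintegral_mono fun x => ?_) _
        rw [mul_left_comm]
        gcongr
        exact enorm_fderiv_norm_rpow_le_ofReal_mul (hf.differentiable one_ne_zero) hr x
    _ = (C * r.toNNReal : NNReal) *
          ∫⁻ x, ‖x‖ₑ ^ a * (‖f x‖ₑ ^ (r - 1) * ‖fderiv ℝ f x‖ₑ) ∂μ := by
        rw [lintegral_const_mul' _ _ ENNReal.ofReal_ne_top, ← mul_assoc, ENNReal.coe_mul]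
        rfl

lemma exists_rpow_lintegral_le_lintegral_rpow_mul_fderiv {p q a b : ℝ} (hp : 1 ≤ p)
    (hpq : p ≤ q) (hb : -(finrank ℝ E : ℝ) / q < b) (hba : b ≤ a)
    (hscal : a - b - 1 = finrank ℝ E / q - finrank ℝ E / p) :
    ∃ C : NNReal, ∀ f : E → F, ContDiff ℝ 1 f → HasCompactSupport f →
      (∫⁻ x, ‖x‖ₑ ^ (b * q) * ‖f x‖ₑ ^ q ∂μ) ^ (1 / q + (1 - 1 / p)) ≤
        C * ∫⁻ x, ‖x‖ₑ ^ (a + b * q * (1 - 1 / p)) *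
          (‖f x‖ₑ ^ (q * (1 - 1 / p)) * ‖fderiv ℝ f x‖ₑ) ∂μ := by
  have hp_pos : 0 < p := one_pos.trans_le hp
  have hq_pos : 0 < q := hp_pos.trans_le hpq
  have hp_inv : 0 ≤ 1 - 1 / p := sub_nonneg.2 ((div_le_one hp_pos).2 hp)
  obtain ⟨r, hr⟩ : ∃ r : ℝ, r = 1 + q * (1 - 1 / p) := ⟨_, rfl⟩
  have hr_one : 1 ≤ r := hr ▸ le_add_of_nonneg_right (by positivity)
  have hr_pos : 0 < r := one_pos.trans_le hr_one
  have hrq : r ≤ q := by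
    have : 1 ≤ q / p := (one_le_div hp_pos).2 hpq
    linarith [show q * (1 - 1 / p) = q - q / p by ring]
  have h_scaled (c : ℝ) : c / (q / r) = r * (c / q) := by field_simp
  have h_scaled_finrank : r * (finrank ℝ E / q : ℝ) - finrank ℝ E =
      finrank ℝ E / q - finrank ℝ E / p := by
    rw [hr]
    field_simp
    ring
  have h_exponent : 1 / q + (1 - 1 / p) = 1 / (q / r) := by
    rw [hr]
    field_simp
  obtain ⟨C, hC⟩ := caffarelli_kohn_nirenberg_one_norm_rpow (F := F) μ
    (a := a + b * q * (1 - 1 / p)) (b := r * b) hr_one ((one_le_div hr_pos).2 hrq)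
    (by rw [h_scaled]; gcongr) (by rw [hr]; linear_combination hba)
    (by rw [h_scaled, h_scaled_finrank, hr]; linear_combination hscal)
  refine ⟨C, fun f hf hf_supp => ?_⟩
  have h_rpow (x : E) :
      (‖x‖ₑ ^ (r * b) * ‖f x‖ₑ ^ r) ^ (q / r) = ‖x‖ₑ ^ (b * q) * ‖f x‖ₑ ^ q := by
    rw [ENNReal.mul_rpow_of_nonneg _ _ (by positivity), ← ENNReal.rpow_mul,
      ← ENNReal.rpow_mul, mul_right_comm, mul_div_cancel₀ q hr_pos.ne', mul_comm q]
  simp_rw [h_exponent, ← h_rpow]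
  simpa only [hr, add_sub_cancel_left] using hC f hf hf_supp

theorem caffarelli_kohn_nirenberg_lintegral {p q a b : ℝ} (hp : 1 ≤ p)
    (hpq : p ≤ q) (hb : -(finrank ℝ E : ℝ) / q < b) (hba : b ≤ a)
    (hscal : a - b - 1 = finrank ℝ E / q - finrank ℝ E / p) :
    ∃ C : NNReal, ∀ f : E → F, ContDiff ℝ 1 f → HasCompactSupport f →
      (∫⁻ x, ‖x‖ₑ ^ (b * q) * ‖f x‖ₑ ^ q ∂μ) ^ (1 / q) ≤
        C * (∫⁻ x, ‖x‖ₑ ^ (a * p) * ‖fderiv ℝ f x‖ₑ ^ p ∂μ) ^ (1 / p) := by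
  have hq_pos : 0 < q := by linarith
  have hbq : -(finrank ℝ E : ℝ) < b * q := (div_lt_iff₀ hq_pos).1 hb
  obtain ⟨C, hC⟩ :=
    exists_rpow_lintegral_le_lintegral_rpow_mul_fderiv (F := F) μ hp hpq hb hba hscal
  refine ⟨C, fun f hf hf_supp => ?_⟩
  refine rpow_le_of_rpow_add_le_mul_rpow (t := 1 - 1 / p)
    (lintegral_enorm_rpow_mul_enorm_rpow_ne_top μ hf.continuous hf_supp hbq hq_pos)
    (by positivity) ((hC f hf hf_supp).trans ?_)
  rw [mul_assoc (C : ENNReal)]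
  gcongr
  exact lintegral_weighted_mul_le_rpow_mul_rpow μ hf.continuous
    (hf.continuous_fderiv one_ne_zero) hp q a b

end PowerSubstitution

section General

open Module

variable {E F : Type*} [NormedAddCommGroup E] [InnerProductSpace ℝ E] [FiniteDimensional ℝ E]
  [Nontrivial E] [MeasurableSpace E] [BorelSpace E] [NormedAddCommGroup F] [InnerProductSpace ℝ F]
  (μ : Measure E) [μ.IsAddHaarMeasure]

theorem caffarelli_kohn_nirenberg_general {p q a b : ℝ} (hp : 1 ≤ p) (hpq : p ≤ q)
    (hb : -(finrank ℝ E : ℝ) / q < b) (hba : b ≤ a)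
    (hscal : a - b - 1 = finrank ℝ E / q - finrank ℝ E / p) :
    ∃ C > 0, ∀ f : E → F, ContDiff ℝ 1 f → HasCompactSupport f →
      (∫ x, ‖x‖ ^ (b * q) * ‖f x‖ ^ q ∂μ) ^ (1 / q) ≤
        C * (∫ x, ‖x‖ ^ (a * p) * ‖fderiv ℝ f x‖ ^ p ∂μ) ^ (1 / p) := by
  have hp_pos : 0 < p := one_pos.trans_le hp
  have hq_pos : 0 < q := hp_pos.trans_le hpq
  have hap : -(finrank ℝ E : ℝ) < a * p := by
    rw [← div_lt_iff₀ hp_pos, neg_div]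
    rw [neg_div] at hb
    linarith
  obtain ⟨C, hC⟩ := caffarelli_kohn_nirenberg_lintegral (F := F) μ hp hpq hb hba hscal
  refine ⟨C + 1, by positivity, fun f hf hf_supp => ?_⟩
  have h_fderiv : Continuous (fderiv ℝ f) := hf.continuous_fderiv one_ne_zero
  have h_finite : (∫⁻ x, ‖x‖ₑ ^ (a * p) * ‖fderiv ℝ f x‖ₑ ^ p ∂μ) ^ (1 / p) ≠ ⊤ :=
    ENNReal.rpow_ne_top_of_nonneg (by positivity) <|
      lintegral_enorm_rpow_mul_enorm_rpow_ne_top μ h_fderiv (hf_supp.fderiv ℝ) hap hp_pos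
  rw [integral_norm_rpow_mul_norm_rpow_eq_toReal μ hf.continuous _ hq_pos.le,
    integral_norm_rpow_mul_norm_rpow_eq_toReal μ h_fderiv _ hp_pos.le, ENNReal.toReal_rpow,
    ENNReal.toReal_rpow]
  refine (ENNReal.toReal_mono (ENNReal.mul_ne_top ENNReal.coe_ne_top h_finite)
    (hC f hf hf_supp)).trans ?_
  rw [ENNReal.toReal_mul, ENNReal.coe_toReal]
  gcongr
  exact le_add_of_nonneg_right zero_le_one

end General

/-- A special case of the Caffarelli–Kohn–Nirenberg weighted interpolation inequalities:
for `n ≥ 1`, `1 ≤ p ≤ q < ∞`, `-n/q < b ≤ a` and `a - b - 1 = n/q - n/p`, one has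
`‖|x|^b f‖_{L^q} ≤ C ‖|x|^a ∇f‖_{L^p}` for smooth compactly supported `f`. -/
theorem caffarelli_kohn_nirenberg (n : ℕ) (hn : 1 ≤ n) (p q a b : ℝ)
    (hp : 1 ≤ p) (hpq : p ≤ q) (hb : -(n : ℝ) / q < b) (hba : b ≤ a)
    (hscal : a - b - 1 = (n : ℝ) / q - (n : ℝ) / p) :
    ∃ C > 0, ∀ f : EuclideanSpace ℝ (Fin n) → ℂ,
      ContDiff ℝ (⊤ : ℕ∞) f → HasCompactSupport f →
      (∫ x : EuclideanSpace ℝ (Fin n), ‖x‖ ^ (b * q) * ‖f x‖ ^ q) ^ (1 / q)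
        ≤ C * (∫ x : EuclideanSpace ℝ (Fin n), ‖x‖ ^ (a * p) * ‖fderiv ℝ f x‖ ^ p) ^ (1 / p) := by
  have : Nontrivial (EuclideanSpace ℝ (Fin n)) :=
    Module.nontrivial_of_finrank_pos (R := ℝ) (by rwa [finrank_euclideanSpace_fin])
  obtain ⟨C, hC_pos, hC⟩ := caffarelli_kohn_nirenberg_general (F := ℂ)
    (volume : Measure (EuclideanSpace ℝ (Fin n))) hp hpq (by simpa using hb) hba
    (by simpa using hscal)
  exact ⟨C, hC_pos, fun f hf => hC f (hf.of_le (mod_cast le_top))⟩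
end

section
/- Let n ≥ 1, let 1 ≤ r < ∞, and let γ be a real number with γ + 1 < n/r. Then there exists a constant C > 0 such that for every smooth compactly supported function f : ℝ^n → ℂ, the weighted Hardy inequality (∫_{ℝ^n} |x|^{−(γ+1)r} |f(x)|^r dx)^{1/r} ≤ C (∫_{ℝ^n} |x|^{−γ r} |∇f(x)|^r dx)^{1/r} holds. -/
open MeasureTheory Real

/-!
Integrating the derivative of `f` along the ray `t ↦ t • x` from `t = 1` to `∞`, the function
`|x|^{-s} f` is dominated by `∫₁^∞ t^{s-1} u(t x) dt`, where `u(x) = |x|^{-s} |f'(x) x|`.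
With `b = n/r - s > 0` and `U_t u(x) = t^{n/r} u(t x)`, an isometry of `L^r(ℝⁿ)`, this is `b⁻¹`
times the average of `U_t u` over the Pareto law `b t^{-b-1} dt` on `[1, ∞)`. An average of
functions of norm `‖u‖_r` has norm at most `‖u‖_r`, whence Hardy's inequality with constant `b⁻¹`.
-/

open Module ProbabilityTheory Set
open scoped ENNReal

section Averages

variable {α β : Type*} [MeasurableSpace α] [MeasurableSpace β]
  (ν : Measure α) [IsProbabilityMeasure ν] {r : ℝ}

lemma rpow_lintegral_le_lintegral_rpow (hr : 1 ≤ r) {g : α → ℝ≥0∞} (hg : AEMeasurable g ν) :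
    (∫⁻ t, g t ∂ν) ^ r ≤ ∫⁻ t, g t ^ r ∂ν := by
  have hr₀ : 0 < r := one_pos.trans_le hr
  have h := eLpNorm'_le_eLpNorm'_of_exponent_le one_pos hr ν hg.aestronglyMeasurable
  simpa [eLpNorm'_eq_lintegral_enorm, ENNReal.le_rpow_inv_iff hr₀] using h

lemma lintegral_rpow_lintegral_le_of_ae_le (μ : Measure β) [SFinite μ] (hr : 1 ≤ r)
    {g : β → α → ℝ≥0∞} (hg : Measurable (Function.uncurry g)) {A : ℝ≥0∞}
    (hA : ∀ᵐ t ∂ν, ∫⁻ x, g x t ^ r ∂μ ≤ A) :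
    ∫⁻ x, (∫⁻ t, g x t ∂ν) ^ r ∂μ ≤ A :=
  calc ∫⁻ x, (∫⁻ t, g x t ∂ν) ^ r ∂μ
      ≤ ∫⁻ x, ∫⁻ t, g x t ^ r ∂ν ∂μ :=
        lintegral_mono fun _ ↦
          rpow_lintegral_le_lintegral_rpow ν hr hg.of_uncurry_left.aemeasurable
    _ = ∫⁻ t, ∫⁻ x, g x t ^ r ∂μ ∂ν := lintegral_lintegral_swap (hg.pow_const r).aemeasurable
    _ ≤ ∫⁻ _, A ∂ν := lintegral_mono_ae hA
    _ = A := by simp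

end Averages

section Pareto

lemma ae_paretoMeasure_le (a b : ℝ) : ∀ᵐ t ∂paretoMeasure a b, a ≤ t := by
  refine (ae_withDensity_iff (measurable_paretoPDFReal a b).ennreal_ofReal).2 (.of_forall ?_)
  exact fun t ht ↦ not_lt.1 fun hlt ↦ ht (paretoPDF_of_lt hlt)

lemma lintegral_paretoMeasure (a b : ℝ) (g : ℝ → ℝ≥0∞) :
    ∫⁻ t, g t ∂paretoMeasure a b =
      ∫⁻ t in Ioi a, ENNReal.ofReal (b * a ^ b * t ^ (-(b + 1))) * g t := by
  have hsupp : (fun t ↦ paretoPDF a b t * g t) = (Ici a).indicator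
      fun t ↦ ENNReal.ofReal (b * a ^ b * t ^ (-(b + 1))) * g t := by
    ext t
    rcases le_or_gt a t with ht | ht
    · simp [ht, paretoPDF_of_le ht]
    · simp [ht, paretoPDF_of_lt ht]
  have hmeas : Measurable (paretoPDF a b) := (measurable_paretoPDFReal a b).ennreal_ofReal
  rw [paretoMeasure, lintegral_withDensity_eq_lintegral_mul_non_measurable _ hmeas
    (.of_forall fun _ ↦ ENNReal.ofReal_lt_top), setLIntegral_congr Ioi_ae_eq_Ici,
    ← lintegral_indicator measurableSet_Ici, ← hsupp]
  simp only [Pi.mul_apply]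

end Pareto

variable {E F : Type*} [NormedAddCommGroup E] [NormedAddCommGroup F] [NormedSpace ℝ F]

section Weights

lemma norm_norm_rpow_smul_rpow (x : E) (y : F) (s r : ℝ) :
    ‖‖x‖ ^ (-s) • y‖ ^ r = ‖x‖ ^ (-(s * r)) * ‖y‖ ^ r := by
  rw [norm_smul, norm_of_nonneg (by positivity), mul_rpow (by positivity) (norm_nonneg y),
    ← rpow_mul (norm_nonneg x), neg_mul]

variable [MeasurableSpace E] [OpensMeasurableSpace E] [SecondCountableTopology E] {g : E → F}

lemma aestronglyMeasurable_norm_rpow_smul (μ : Measure E) (hg : Continuous g) (s : ℝ) :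
    AEStronglyMeasurable (fun x ↦ ‖x‖ ^ (-s) • g x) μ :=
  (by fun_prop : Measurable fun x : E ↦ ‖x‖ ^ (-s)).aestronglyMeasurable.smul
    hg.aestronglyMeasurable

lemma lpNorm_norm_rpow_smul (μ : Measure E) {r : ℝ} (hr : 0 < r) (hg : Continuous g) (s : ℝ) :
    lpNorm (fun x ↦ ‖x‖ ^ (-s) • g x) (ENNReal.ofReal r) μ =
      (∫ x, ‖x‖ ^ (-(s * r)) * ‖g x‖ ^ r ∂μ) ^ (1 / r) := by
  rw [lpNorm_eq_integral_norm_rpow_toReal (by simpa) (by simp)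
    (aestronglyMeasurable_norm_rpow_smul μ hg s)]
  simp [hr.le, norm_norm_rpow_smul_rpow]

end Weights

variable [NormedSpace ℝ E]

section Ray

variable [CompleteSpace F] {f : E → F} {x : E}

lemma enorm_le_lintegral_Ioi_enorm_fderiv (hf : ContDiff ℝ 1 f) (hc : HasCompactSupport f)
    (hx : x ≠ 0) : ‖f x‖ₑ ≤ ∫⁻ t in Ioi (1 : ℝ), ‖fderiv ℝ f (t • x) x‖ₑ := by
  have hderiv (t : ℝ) : deriv (fun t : ℝ ↦ f (t • x)) t = fderiv ℝ f (t • x) x := by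
    have hray : HasDerivAt (fun t : ℝ ↦ t • x) x t := by
      simpa using (hasDerivAt_id t).smul_const x
    exact ((hf.differentiable one_ne_zero (t • x)).hasFDerivAt.comp_hasDerivAt t hray).deriv
  have hftc : ∫ t in Ioi (1 : ℝ), fderiv ℝ f (t • x) x = -f x := by
    simpa [Function.comp_def, hderiv] using HasCompactSupport.integral_Ioi_deriv_eq
      (hf.comp (by fun_prop)) (hc.comp_isClosedEmbedding (isClosedEmbedding_smul_left hx)) 1
  simpa [hftc] using enorm_integral_le_lintegral_enorm
    (μ := volume.restrict (Ioi (1 : ℝ))) fun t ↦ fderiv ℝ f (t • x) x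

lemma enorm_norm_rpow_smul_le_lintegral_Ioi (hf : ContDiff ℝ 1 f) (hc : HasCompactSupport f)
    (hx : x ≠ 0) (s : ℝ) :
    ‖‖x‖ ^ (-s) • f x‖ₑ ≤ ∫⁻ t in Ioi (1 : ℝ),
      ENNReal.ofReal (t ^ (s - 1)) * ‖‖t • x‖ ^ (-s) • fderiv ℝ f (t • x) (t • x)‖ₑ := by
  have hscale : ∀ t ∈ Ioi (1 : ℝ), ‖‖x‖ ^ (-s)‖ₑ * ‖fderiv ℝ f (t • x) x‖ₑ =
      ENNReal.ofReal (t ^ (s - 1)) * ‖‖t • x‖ ^ (-s) • fderiv ℝ f (t • x) (t • x)‖ₑ := by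
    intro t (ht : 1 < t)
    have ht₀ : 0 < t := one_pos.trans ht
    have hcancel : t ^ (s - 1) * (t ^ (-s) * t) = 1 := by
      rw [← rpow_add_one ht₀.ne', ← rpow_add ht₀]
      simp
    rw [← enorm_of_nonneg (by positivity : 0 ≤ t ^ (s - 1)), ← enorm_smul, ← enorm_smul,
      norm_smul, norm_of_nonneg ht₀.le, mul_rpow ht₀.le (norm_nonneg x), map_smul]
    simp only [smul_smul]
    congr 2
    linear_combination (-‖x‖ ^ (-s)) * hcancel
  calc ‖‖x‖ ^ (-s) • f x‖ₑ
      ≤ ‖‖x‖ ^ (-s)‖ₑ * ∫⁻ t in Ioi (1 : ℝ), ‖fderiv ℝ f (t • x) x‖ₑ := by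
        rw [enorm_smul]
        gcongr
        exact enorm_le_lintegral_Ioi_enorm_fderiv hf hc hx
    _ = _ := by
        rw [← lintegral_const_mul' _ _ enorm_ne_top]
        exact setLIntegral_congr_fun measurableSet_Ioi hscale

end Ray

variable [FiniteDimensional ℝ E] [MeasurableSpace E] [BorelSpace E]
  (μ : Measure E) [μ.IsAddHaarMeasure]

section Dilations

variable {r s t : ℝ}

lemma lintegral_comp_smul_of_pos (u : E → ℝ≥0∞) (ht : 0 < t) :
    ∫⁻ x, u (t • x) ∂μ = ENNReal.ofReal (t ^ (-(finrank ℝ E : ℝ))) * ∫⁻ x, u x ∂μ := by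
  rw [← (measurableEmbedding_const_smul₀ ht.ne').lintegral_map, Measure.map_addHaar_smul μ ht.ne',
    lintegral_smul_measure, smul_eq_mul, abs_of_pos (by positivity), rpow_neg ht.le, rpow_natCast]

lemma lintegral_rpow_dilation (hr : 0 < r) (u : E → ℝ≥0∞) (ht : 0 < t) :
    ∫⁻ x, (ENNReal.ofReal (t ^ (finrank ℝ E / r)) * u (t • x)) ^ r ∂μ = ∫⁻ x, u x ^ r ∂μ := by
  have hpow : ENNReal.ofReal (t ^ (finrank ℝ E / r)) ^ r =
      ENNReal.ofReal (t ^ (finrank ℝ E : ℝ)) := by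
    rw [ENNReal.ofReal_rpow_of_nonneg (by positivity) hr.le, ← rpow_mul ht.le,
      div_mul_cancel₀ _ hr.ne']
  simp only [ENNReal.mul_rpow_of_nonneg _ _ hr.le, hpow]
  rw [lintegral_const_mul' _ _ ENNReal.ofReal_ne_top,
    lintegral_comp_smul_of_pos μ (fun x ↦ u x ^ r) ht, ← mul_assoc,
    ← ENNReal.ofReal_mul (by positivity), ← rpow_add ht]
  simp

lemma lintegral_rpow_lintegral_Ioi_dilation_le (hr : 1 ≤ r) (hs : s < finrank ℝ E / r)
    {u : E → ℝ≥0∞} (hu : Measurable u) :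
    ∫⁻ x, (∫⁻ t in Ioi (1 : ℝ), ENNReal.ofReal (t ^ (s - 1)) * u (t • x)) ^ r ∂μ ≤
      ENNReal.ofReal (finrank ℝ E / r - s)⁻¹ ^ r * ∫⁻ x, u x ^ r ∂μ := by
  have hr₀ : 0 < r := one_pos.trans_le hr
  set b : ℝ := finrank ℝ E / r - s with hb
  have hb₀ : 0 < b := sub_pos.2 hs
  have := isProbabilityMeasure_paretoMeasure one_pos hb₀
  have hpareto (x : E) : ∫⁻ t in Ioi (1 : ℝ), ENNReal.ofReal (t ^ (s - 1)) * u (t • x) =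
      ENNReal.ofReal b⁻¹ *
        ∫⁻ t, ENNReal.ofReal (t ^ (finrank ℝ E / r)) * u (t • x) ∂paretoMeasure 1 b := by
    rw [lintegral_paretoMeasure, ← lintegral_const_mul' _ _ ENNReal.ofReal_ne_top]
    refine setLIntegral_congr_fun measurableSet_Ioi fun t (ht : 1 < t) ↦ ?_
    have ht₀ : 0 < t := one_pos.trans ht
    have hexp : t ^ (s - 1) = b⁻¹ * (b * 1 ^ b * t ^ (-(b + 1)) * t ^ (finrank ℝ E / r)) := by
      rw [mul_assoc _ (t ^ _), ← rpow_add ht₀, one_rpow, mul_one, inv_mul_cancel_left₀ hb₀.ne', hb]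
      ring_nf
    rw [hexp, ENNReal.ofReal_mul (by positivity), ENNReal.ofReal_mul (by positivity), mul_assoc,
      mul_assoc]
  simp only [hpareto, ENNReal.mul_rpow_of_nonneg _ _ hr₀.le]
  rw [lintegral_const_mul' _ _ (by finiteness)]
  gcongr _ * ?_
  refine lintegral_rpow_lintegral_le_of_ae_le (paretoMeasure 1 b) μ hr
    (g := fun x t ↦ ENNReal.ofReal (t ^ (finrank ℝ E / r)) * u (t • x)) (by fun_prop) ?_
  filter_upwards [ae_paretoMeasure_le 1 b] with t ht
  exact (lintegral_rpow_dilation μ hr₀ u (one_pos.trans_le ht)).le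

end Dilations

section Hardy

variable [Nontrivial E] [CompleteSpace F] {f : E → F} {p : ℝ≥0∞} {s : ℝ}

theorem eLpNorm_norm_rpow_smul_le_eLpNorm_fderiv_self (hp : 1 ≤ p) (hp' : p ≠ ∞)
    (hs : s < finrank ℝ E / p.toReal) (hf : ContDiff ℝ 1 f) (hc : HasCompactSupport f) :
    eLpNorm (fun x ↦ ‖x‖ ^ (-s) • f x) p μ ≤
      ENNReal.ofReal (finrank ℝ E / p.toReal - s)⁻¹ *
        eLpNorm (fun x ↦ ‖x‖ ^ (-s) • fderiv ℝ f x x) p μ := by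
  have hp₀ : p ≠ 0 := (one_pos.trans_le hp).ne'
  have hr : 1 ≤ p.toReal := by simpa using ENNReal.toReal_mono hp' hp
  have hr₀ : 0 < p.toReal := one_pos.trans_le hr
  set u : E → ℝ≥0∞ := fun x ↦ ‖‖x‖ ^ (-s) • fderiv ℝ f x x‖ₑ
  have hu : Measurable u := by
    have hcont : Continuous fun x ↦ fderiv ℝ f x x :=
      (hf.continuous_fderiv one_ne_zero).clm_apply continuous_id
    simp only [u, enorm_smul]
    exact (by fun_prop : Measurable fun x : E ↦ ‖‖x‖ ^ (-s)‖ₑ).mul hcont.enorm.measurable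
  rw [eLpNorm_eq_lintegral_rpow_enorm_toReal hp₀ hp',
    eLpNorm_eq_lintegral_rpow_enorm_toReal hp₀ hp', one_div, ENNReal.rpow_inv_le_iff hr₀,
    ENNReal.mul_rpow_of_nonneg _ _ hr₀.le, ENNReal.rpow_inv_rpow hr₀.ne']
  refine le_trans (lintegral_mono_ae ?_) (lintegral_rpow_lintegral_Ioi_dilation_le μ hr hs hu)
  filter_upwards [Measure.ae_ne μ 0] with x hx
  gcongr
  exact enorm_norm_rpow_smul_le_lintegral_Ioi hf hc hx s

theorem eLpNorm_norm_rpow_smul_le_eLpNorm_fderiv (hp : 1 ≤ p) (hp' : p ≠ ∞)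
    (hs : s + 1 < finrank ℝ E / p.toReal) (hf : ContDiff ℝ 1 f) (hc : HasCompactSupport f) :
    eLpNorm (fun x ↦ ‖x‖ ^ (-(s + 1)) • f x) p μ ≤
      ENNReal.ofReal (finrank ℝ E / p.toReal - (s + 1))⁻¹ *
        eLpNorm (fun x ↦ ‖x‖ ^ (-s) • fderiv ℝ f x) p μ := by
  refine (eLpNorm_norm_rpow_smul_le_eLpNorm_fderiv_self μ hp hp' hs hf hc).trans ?_
  gcongr
  refine eLpNorm_mono fun x ↦ ?_
  rcases eq_or_ne x 0 with rfl | hx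
  · simp
  have hx₀ : 0 < ‖x‖ := norm_pos_iff.2 hx
  calc ‖‖x‖ ^ (-(s + 1)) • fderiv ℝ f x x‖
      ≤ ‖x‖ ^ (-(s + 1)) * (‖fderiv ℝ f x‖ * ‖x‖) := by
        rw [norm_smul, norm_of_nonneg (by positivity)]
        gcongr
        exact (fderiv ℝ f x).le_opNorm x
    _ = ‖x‖ ^ (-(s + 1) + 1) * ‖fderiv ℝ f x‖ := by
        rw [rpow_add_one hx₀.ne']
        ring
    _ = ‖‖x‖ ^ (-s) • fderiv ℝ f x‖ := by
        rw [norm_smul, norm_of_nonneg (by positivity)]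
        ring_nf

end Hardy

section Integrability

variable [Nontrivial E] {r s : ℝ} {g : E → F}

lemma locallyIntegrable_norm_rpow (hs : -(finrank ℝ E : ℝ) < s) :
    LocallyIntegrable (fun x : E ↦ ‖x‖ ^ s) μ := by
  have hball {R : ℝ} (hR : 0 ≤ R) : IntegrableOn (fun x : E ↦ ‖x‖ ^ s) (Metric.ball 0 R) μ := by
    rw [integrableOn_fun_norm_addHaar μ (f := fun y ↦ y ^ s)]
    have hradial : IntegrableOn (fun y : ℝ ↦ y ^ ((finrank ℝ E : ℝ) - 1 + s)) (Ioo 0 R) :=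
      (intervalIntegrable_iff_integrableOn_Ioo_of_le hR).1
        (intervalIntegral.intervalIntegrable_rpow' (by linarith))
    refine hradial.congr_fun (fun y hy ↦ ?_) measurableSet_Ioo
    simp only [smul_eq_mul]
    rw [rpow_add hy.1, ← rpow_natCast y, Nat.cast_sub finrank_pos, Nat.cast_one]
  exact fun x ↦ ⟨Metric.ball 0 (‖x‖ + 1), Metric.isOpen_ball.mem_nhds (by simp),
    hball (by positivity)⟩

lemma memLp_norm_rpow_smul (hr : 0 < r) (hs : s < finrank ℝ E / r) (hg : Continuous g)
    (hc : HasCompactSupport g) :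
    MemLp (fun x ↦ ‖x‖ ^ (-s) • g x) (ENNReal.ofReal r) μ := by
  have hint : Integrable (fun x ↦ ‖x‖ ^ (-(s * r)) • ‖g x‖ ^ r) μ := by
    refine (locallyIntegrable_norm_rpow μ ?_).integrable_smul_right_of_hasCompactSupport
      (hg.norm.rpow_const fun _ ↦ .inr hr.le) (hc.comp_left (g := (‖·‖ ^ r)) ?_)
    · exact neg_lt_neg ((lt_div_iff₀ hr).1 hs)
    · simp [hr.ne']
  refine (integrable_norm_rpow_iff (aestronglyMeasurable_norm_rpow_smul μ hg s) ?_ ?_).1 ?_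
  · simpa
  · simp
  · simpa [hr.le, norm_norm_rpow_smul_rpow] using hint

end Integrability

theorem weighted_hardy_general [Nontrivial E] [CompleteSpace F] {r γ : ℝ} (hr : 1 ≤ r)
    (hγ : γ + 1 < finrank ℝ E / r) {f : E → F} (hf : ContDiff ℝ 1 f) (hc : HasCompactSupport f) :
    (∫ x, ‖x‖ ^ (-((γ + 1) * r)) * ‖f x‖ ^ r ∂μ) ^ (1 / r) ≤
      (finrank ℝ E / r - (γ + 1))⁻¹ *
        (∫ x, ‖x‖ ^ (-(γ * r)) * ‖fderiv ℝ f x‖ ^ r ∂μ) ^ (1 / r) := by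
  have hr₀ : 0 < r := one_pos.trans_le hr
  have hr' : (ENNReal.ofReal r).toReal = r := ENNReal.toReal_ofReal hr₀.le
  have hdf : Continuous (fderiv ℝ f) := hf.continuous_fderiv one_ne_zero
  have hmem : MemLp (fun x ↦ ‖x‖ ^ (-γ) • fderiv ℝ f x) (ENNReal.ofReal r) μ :=
    memLp_norm_rpow_smul μ hr₀ (by linarith) hdf (hc.fderiv ℝ)
  have hardy := eLpNorm_norm_rpow_smul_le_eLpNorm_fderiv μ (ENNReal.one_le_ofReal.2 hr)
    ENNReal.ofReal_ne_top (by rwa [hr']) hf hc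
  rw [← lpNorm_norm_rpow_smul μ hr₀ hf.continuous, ← lpNorm_norm_rpow_smul μ hr₀ hdf,
    ← toReal_eLpNorm (aestronglyMeasurable_norm_rpow_smul μ hf.continuous _),
    ← toReal_eLpNorm hmem.1]
  have hbound := ENNReal.toReal_mono (ENNReal.mul_ne_top ENNReal.ofReal_ne_top hmem.2.ne) hardy
  rwa [ENNReal.toReal_mul, hr', ENNReal.toReal_ofReal (inv_nonneg.2 (sub_nonneg.2 hγ.le))]
    at hbound

/-- A weighted Hardy inequality: for `n ≥ 1`, `1 ≤ r < ∞` and `γ + 1 < n/r`, one has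
`‖|x|^{-(γ+1)} f‖_{L^r} ≤ C ‖|x|^{-γ} ∇f‖_{L^r}` for smooth compactly supported `f`. -/
theorem weighted_hardy (n : ℕ) (hn : 1 ≤ n) (r γ : ℝ)
    (hr : 1 ≤ r) (hγ : γ + 1 < (n : ℝ) / r) :
    ∃ C > 0, ∀ f : EuclideanSpace ℝ (Fin n) → ℂ,
      ContDiff ℝ (⊤ : ℕ∞) f → HasCompactSupport f →
      (∫ x : EuclideanSpace ℝ (Fin n), ‖x‖ ^ (-((γ + 1) * r)) * ‖f x‖ ^ r) ^ (1 / r)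
        ≤ C * (∫ x : EuclideanSpace ℝ (Fin n), ‖x‖ ^ (-(γ * r)) * ‖fderiv ℝ f x‖ ^ r) ^ (1 / r) := by
  have : NeZero n := ⟨Nat.one_le_iff_ne_zero.1 hn⟩
  exact ⟨(n / r - (γ + 1))⁻¹, inv_pos.2 (sub_pos.2 hγ), fun f hf hc ↦ by
    simpa using weighted_hardy_general volume hr (by simpa) (hf.of_le (mod_cast le_top)) hc⟩
end
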